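/- Let N = (S, A, T) be a P/T Petri net and R ⊆ S × S an equivalence relation on places. If (m1 ⊕ m1', m2 ⊕ m2') ∈ R⊕ and (m1, m2) ∈ R⊕, then (m1', m2') ∈ R⊕, i.e., the additive closure of an equivalence relation is subtractive. -/

import Mathlib

/-- A transition of a P/T net: a triple (pre-set, label, post-set). -/
structure PNTrans (S A : Type) where
  pre : Multiset S
  label : A
  post : Multiset S
deriving DecidableEq

/-- A P/T Petri net over places `S` and labels `A`: a finite set of transitions,
each with a nonempty pre-set. -/
structure PetriNet (S A : Type) [DecidableEq S] [DecidableEq A] where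
  T : Finset (PNTrans S A)
  pre_ne : ∀ t ∈ T, t.pre ≠ 0

/-- The additive closure `R⊕` of a place relation `R`: the least relation on markings
containing `(θ, θ)` and closed under adding `R`-related places on both sides. -/
inductive AddClosure {S : Type} (R : S → S → Prop) : Multiset S → Multiset S → Prop
  | zero : AddClosure R 0 0
  | cons {s1 s2 : S} {m1 m2 : Multiset S} :
      R s1 s2 → AddClosure R m1 m2 → AddClosure R (s1 ::ₘ m1) (s2 ::ₘ m2)

/-!
A member of `R⊕` is a pair of markings that admits an `R`-matching. A single related pair `(a, b)`
can be cancelled from a matching of `a ::ₘ s` with `b ::ₘ t` by an exchange: if `a` is matched with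
`d` and `b` with `c`, then `c` and `d` are related through the zigzag `R c b`, `R a b`, `R a d`, so
matching them with each other leaves a matching of `s` with `t`. Cancelling the pairs of a matching
of `m1` with `m2` one after another gives subtractivity.
-/

/-- A relation is difunctional if it relates the endpoints of every zigzag `a → b ← c → d` of
related pairs. This is the property that makes matchings cancellative; it is stated between two
types because the two sides of a matching play different roles. -/
def Difunctional {α β : Type*} (R : α → β → Prop) : Prop :=
  ∀ ⦃a b c d⦄, R a b → R c b → R c d → R a d

theorem Difunctional.of_equivalence {α : Type*} {R : α → α → Prop} (hR : Equivalence R) :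
    Difunctional R :=
  fun _ _ _ _ hab hcb hcd => hR.trans hab (hR.trans (hR.symm hcb) hcd)

namespace Difunctional

variable {α β : Type*} {R : α → β → Prop} {a : α} {b : β} {s u : Multiset α} {t v : Multiset β}

theorem rel_of_rel_cons_cons (hR : Difunctional R) (hab : R a b)
    (h : Multiset.Rel R (a ::ₘ s) (b ::ₘ t)) : Multiset.Rel R s t := by
  obtain ⟨d, t', had, hst', ht⟩ := Multiset.rel_cons_left.1 h
  obtain ⟨-, rfl⟩ | ⟨-, w, rfl, rfl⟩ := Multiset.cons_eq_cons.1 ht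
  · exact hst'
  · obtain ⟨c, s', hcb, hs'w, rfl⟩ := Multiset.rel_cons_right.1 hst'
    have hcd : R c d := hR hcb hab had
    exact .cons hcd hs'w

theorem rel_of_rel_add (hR : Difunctional R) (h : Multiset.Rel R (s + u) (t + v))
    (hst : Multiset.Rel R s t) : Multiset.Rel R u v := by
  induction hst with
  | zero => simpa only [zero_add] using h
  | cons hab _ ih =>
    rw [Multiset.cons_add, Multiset.cons_add] at h
    exact ih (hR.rel_of_rel_cons_cons hab h)

end Difunctional

theorem addClosure_iff_rel {S : Type} {R : S → S → Prop} {m1 m2 : Multiset S} :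
    AddClosure R m1 m2 ↔ Multiset.Rel R m1 m2 := by
  constructor <;> intro h
  · induction h with
    | zero => exact .zero
    | cons hs _ ih => exact .cons hs ih
  · induction h with
    | zero => exact .zero
    | cons hs _ ih => exact .cons hs ih

theorem addClosure_sub_general {S : Type} {R : S → S → Prop} (hR : Difunctional R)
    {m1 m2 m1' m2' : Multiset S} (h : AddClosure R (m1 + m1') (m2 + m2'))
    (h' : AddClosure R m1 m2) : AddClosure R m1' m2' := by
  rw [addClosure_iff_rel] at h h' ⊢
  exact hR.rel_of_rel_add h h'

/-- the additive closure of an equivalence relation is subtractive. -/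
theorem addClosure_sub {S A : Type} [Fintype S] [Fintype A]
    [DecidableEq S] [DecidableEq A] (N : PetriNet S A)
    (R : S → S → Prop) (hR : Equivalence R) (m1 m2 m1' m2' : Multiset S)
    (h : AddClosure R (m1 + m1') (m2 + m2')) (h' : AddClosure R m1 m2) :
    AddClosure R m1' m2' :=
  addClosure_sub_general (.of_equivalence hR) h h'
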